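/- Let q be an odd prime power with q ≡ 1 (mod 4), let k be a divisor of q−1 with 3 < k < q−1, and suppose e = (q−1)/k is even. Then (q,k) gives a 3-design if and only if the sum of Δ({x,y,z}) over all 3-element subsets {x,y,z} of B equals 0, where Δ({z₁,z₂,z₃}) = χ((z₁−z₂)(z₂−z₃)(z₃−z₁)) and χ is the quadratic residue character of F_q. -/

import Mathlib

/-!
Setting: `F` is a finite field of order `q`. The projective line `PG(1,q)` is
modelled as `Projectivization F (Fin 2 → F)`. Since scalar matrices act trivially
on the projective line, the images of a set under all elements of `SL(2,F)` form
exactly its `PSL(2,F)`-orbit; `mapSL g` is the map of the projective line induced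
by `g : SL(2,F)`. For `k ∣ q - 1`, the unique subgroup of order `k` of `Fˣ` is the
set of `k`-th roots of unity `{x : F | x ^ k = 1}`, embedded into the projective
line via `x ↦ [x : 1]`. `(q, k)` gives a 3-design iff there is `lam > 0` such that
every 3-subset of the projective line lies in exactly `lam` blocks of the orbit.
-/

noncomputable section

open Matrix

/-- The point at infinity `[1 : 0]` of the projective line over `F`. -/
def inftyPt (F : Type) [Field F] : Projectivization F (Fin 2 → F) :=
  Projectivization.mk F ![1, 0] (by
    intro h
    simpa using congrFun h 0)

/-- The embedding of `F` into the projective line, `x ↦ [x : 1]`. -/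
def embedPt (F : Type) [Field F] (x : F) : Projectivization F (Fin 2 → F) :=
  Projectivization.mk F ![x, 1] (by
    intro h
    simpa using congrFun h 1)

/-- The action of `g : SL(2,F)` on the projective line (as linear fractional
transformation). -/
def mapSL {F : Type} [Field F] (g : Matrix.SpecialLinearGroup (Fin 2) F) :
    Projectivization F (Fin 2 → F) → Projectivization F (Fin 2 → F) :=
  Projectivization.map (Matrix.SpecialLinearGroup.toLin' g : (Fin 2 → F) →ₗ[F] (Fin 2 → F))
    (Matrix.SpecialLinearGroup.toLin' g).injective

/-- The starter block: the unique subgroup of order `k` of `Fˣ` (the `k`-th roots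
of unity, for `k ∣ q - 1`), regarded as a subset of the projective line. -/
def starterB (F : Type) [Field F] (k : ℕ) : Set (Projectivization F (Fin 2 → F)) :=
  embedPt F '' {x : F | x ^ k = 1}

/-- The `PSL(2,F)`-orbit `GB` of the starter block. -/
def designBlocks (F : Type) [Field F] (k : ℕ) :
    Set (Set (Projectivization F (Fin 2 → F))) :=
  {S | ∃ g : Matrix.SpecialLinearGroup (Fin 2) F, S = mapSL g '' starterB F k}

/-- `GB` is the block set of a `3-(q+1, k, lam)` design: `lam` is positive and every
3-subset of the projective line is contained in exactly `lam` blocks. -/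
def isThreeDesign (F : Type) [Field F] (k lam : ℕ) : Prop :=
  0 < lam ∧
    ∀ T : Finset (Projectivization F (Fin 2 → F)), T.card = 3 →
      {S ∈ designBlocks F k | (T : Set (Projectivization F (Fin 2 → F))) ⊆ S}.ncard = lam

/-- `(q, k)` gives a 3-design. -/
def gives3Design (F : Type) [Field F] (k : ℕ) : Prop :=
  ∃ lam : ℕ, isThreeDesign F k lam

/-!
For representatives `u`, `v`, `w` of three points of the projective line, the sign
`χ (det (u, v) * det (v, w) * det (w, u))` depends only on the ordered triple of points. An element
`g` of `GL(2, F)` multiplies this sign by `χ (det g)`, and `GL(2, F)` is transitive on ordered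
triples of distinct points, so `PSL(2, F)` has exactly two orbits on such triples, one for each
sign. The orbit of a block is therefore a 3-design if and only if the number of blocks through a
triple takes the same value on both orbits. As these are interchanged by a matrix of nonsquare
determinant, this happens if and only if the signed sum of these numbers over all triples vanishes.
Counting pairs (triple, block through it) the other way round, that signed sum is the number of
blocks times the sum of the signs of the triples in one block.
-/

open scoped LinearAlgebra.Projectivization Pointwise MatrixGroups

namespace OrbitDesign

/-! ### Designs and orbits of blocks -/

section Design

variable {X : Type*}

/-- The number of members of the block set `𝓑` containing `T`. -/
def blockCount (𝓑 : Set (Set X)) (T : Set X) : ℕ :=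
  {S ∈ 𝓑 | T ⊆ S}.ncard

/-- `𝓑` is the block set of an `n`-design: all `n`-subsets of `X` lie in the same positive number of
blocks. The block size is left out, as it is constant on the orbits considered here. -/
def IsDesign (n : ℕ) (𝓑 : Set (Set X)) : Prop :=
  ∃ lam : ℕ, 0 < lam ∧ ∀ T : Finset X, T.card = n → blockCount 𝓑 (T : Set X) = lam

theorem exists_injective_range_eq {n : ℕ} {T : Finset X} (hT : T.card = n) :
    ∃ t : Fin n → X, Function.Injective t ∧ Set.range t = T :=
  ⟨fun i ↦ (T.equivFinOfCardEq hT).symm i,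
    Subtype.val_injective.comp (T.equivFinOfCardEq hT).symm.injective,
    ((T.equivFinOfCardEq hT).symm.surjective.range_comp Subtype.val).trans Subtype.range_coe⟩

theorem isDesign_iff_blockCount_range_eq {n : ℕ} {𝓑 : Set (Set X)} {T₀ : Finset X}
    (hT₀ : T₀.card = n) (hpos : 0 < blockCount 𝓑 (T₀ : Set X)) :
    IsDesign n 𝓑 ↔ ∀ s t : Fin n → X, Function.Injective s → Function.Injective t →
      blockCount 𝓑 (Set.range s) = blockCount 𝓑 (Set.range t) := by
  classical
  constructor
  · rintro ⟨lam, -, hlam⟩ s t hs ht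
    have count_eq {r : Fin n → X} (hr : Function.Injective r) :
        blockCount 𝓑 (Set.range r) = lam := by
      simpa using hlam (Finset.univ.image r) (by simp [Finset.card_image_of_injective _ hr])
    rw [count_eq hs, count_eq ht]
  · intro h
    refine ⟨_, hpos, fun T hT ↦ ?_⟩
    obtain ⟨t, ht, hrange⟩ := exists_injective_range_eq hT
    obtain ⟨t₀, ht₀, hrange₀⟩ := exists_injective_range_eq hT₀
    rw [← hrange, ← hrange₀, h t t₀ ht ht₀]

variable {G : Type*} [Group G] [MulAction G X]

theorem blockCount_orbit_smul (B : Set X) (g : G) (T : Set X) :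
    blockCount (MulAction.orbit G B) (g • T) = blockCount (MulAction.orbit G B) T := by
  have blocks_smul : {S ∈ MulAction.orbit G B | g • T ⊆ S} =
      g • {S ∈ MulAction.orbit G B | T ⊆ S} := by
    ext S
    rw [Set.mem_smul_set_iff_inv_smul_mem, Set.mem_sep_iff, Set.mem_sep_iff,
      Set.subset_smul_set_iff, inv_inv, ← Set.mem_smul_set_iff_inv_smul_mem,
      MulAction.smul_orbit]
  rw [blockCount, blocks_smul, Set.ncard_smul_set, blockCount]

theorem blockCount_orbit_pos [Finite X] {B T : Set X} (hT : T ⊆ B) :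
    0 < blockCount (MulAction.orbit G B) T :=
  (Set.ncard_pos (Set.toFinite _)).2 ⟨B, MulAction.mem_orbit_self B, hT⟩

variable {ι : Type*} [Fintype ι] [DecidableEq ι] [Fintype X]

open Classical in
theorem sum_range_subset_smul {M : Type*} [AddCommMonoid M] {f : (ι → X) → M}
    (hf : ∀ (g : G) t, f (g • t) = f t) (g : G) (B : Set X) :
    ∑ t with Set.range t ⊆ g • B, f t = ∑ t with Set.range t ⊆ B, f t := by
  refine (Finset.sum_equiv (MulAction.toPerm g) (fun t ↦ ?_) fun t _ ↦ (hf g t).symm).symm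
  have range_smul : Set.range (g • t) = g • Set.range t := Set.range_smul g t
  simp [range_smul]

open Classical in
theorem sum_mul_blockCount_orbit {R : Type*} [CommSemiring R] {f : (ι → X) → R}
    (hf : ∀ (g : G) t, f (g • t) = f t) (B : Set X) :
    ∑ t, f t * blockCount (MulAction.orbit G B) (Set.range t) =
      (MulAction.orbit G B).ncard * ∑ t with Set.range t ⊆ B, f t := by
  set 𝓑 : Finset (Set X) := (Set.toFinite (MulAction.orbit G B)).toFinset with h𝓑
  have count_eq (t : ι → X) : blockCount (MulAction.orbit G B) (Set.range t) =
      (𝓑.filter (Set.range t ⊆ ·)).card := by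
    rw [blockCount, ← Set.ncard_coe_finset]
    simp [h𝓑]
  have block_sum {S : Set X} (hS : S ∈ 𝓑) :
      ∑ t with Set.range t ⊆ S, f t = ∑ t with Set.range t ⊆ B, f t := by
    obtain ⟨g, rfl⟩ := (Set.Finite.mem_toFinset _).1 hS
    exact sum_range_subset_smul hf g B
  calc
    _ = ∑ t, ∑ S ∈ 𝓑, if Set.range t ⊆ S then f t else 0 := by
      simp [count_eq, ← Finset.sum_filter, mul_comm]
    _ = ∑ S ∈ 𝓑, ∑ t with Set.range t ⊆ S, f t := by
      rw [Finset.sum_comm]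
      simp [Finset.sum_filter]
    _ = _ := by
      rw [Finset.sum_congr rfl fun S ↦ block_sum, Finset.sum_const, nsmul_eq_mul,
        Set.ncard_eq_toFinset_card _ (Set.toFinite _)]

open Classical in
theorem sum_range_subset_image {M Y : Type*} [AddCommMonoid M] {e : Y → X}
    (he : Function.Injective e) (B : Finset Y) (f : (Fin 3 → X) → M) :
    ∑ t with Set.range t ⊆ e '' B, f t =
      ∑ x ∈ B, ∑ y ∈ B, ∑ z ∈ B, f ![e x, e y, e z] := by
  simp only [← Finset.sum_product']
  refine (Finset.sum_nbij (fun p : Y × Y × Y ↦ ![e p.1, e p.2.1, e p.2.2]) ?_ ?_ ?_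
    fun p _ ↦ rfl).symm
  · rintro ⟨x, y, z⟩ hp
    simp_all [Set.range_subset_iff, Fin.forall_fin_succ, he.eq_iff]
  · rintro ⟨x, y, z⟩ - ⟨x', y', z'⟩ - h
    simpa [he.eq_iff] using h
  · intro t ht
    simp only [Finset.coe_filter, Finset.mem_univ, true_and, Set.mem_ofPred_eq,
      Set.range_subset_iff] at ht
    choose b hb hbt using ht
    refine ⟨(b 0, b 1, b 2), by simpa using ⟨hb 0, hb 1, hb 2⟩, ?_⟩
    ext i
    fin_cases i <;> simp [hbt]

end Design

/-! ### Triples of points of the projective line -/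

section Wedge

variable {R : Type*} [CommRing R]

/-- The determinant of the matrix with columns `u` and `v`; for nonzero vectors over a field it
detects equality of the corresponding points of the projective line. -/
def wedge (u v : Fin 2 → R) : R :=
  u 0 * v 1 - u 1 * v 0

theorem wedge_mulVec (A : Matrix (Fin 2) (Fin 2) R) (u v : Fin 2 → R) :
    wedge (A *ᵥ u) (A *ᵥ v) = A.det * wedge u v := by
  simp only [wedge, Matrix.det_fin_two, Matrix.mulVec_eq_sum, Fin.sum_univ_two, Pi.add_apply,
    Pi.smul_apply, Matrix.transpose_apply, MulOpposite.smul_eq_mul_unop, MulOpposite.unop_op]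
  ring

theorem wedge_smul_smul (a b : R) (u v : Fin 2 → R) :
    wedge (a • u) (b • v) = a * b * wedge u v := by
  simp only [wedge, Pi.smul_apply, smul_eq_mul]
  ring

theorem wedge_smul_add_wedge_smul (u v w : Fin 2 → R) :
    wedge v w • u + wedge w u • v = -wedge u v • w := by
  ext i
  fin_cases i <;> simp [wedge] <;> ring

/-- The product of the determinants of the three cyclically consecutive pairs of a triple of
vectors; on the vectors `![x, 1]`, `![y, 1]`, `![z, 1]` it is `(x - y) * (y - z) * (z - x)`. -/
def cyclicWedge (v : Fin 3 → Fin 2 → R) : R :=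
  wedge (v 0) (v 1) * (wedge (v 1) (v 2) * wedge (v 2) (v 0))

theorem cyclicWedge_mulVec (A : Matrix (Fin 2) (Fin 2) R) (v : Fin 3 → Fin 2 → R) :
    cyclicWedge (fun i ↦ A *ᵥ v i) = A.det ^ 2 * (A.det * cyclicWedge v) := by
  simp only [cyclicWedge, wedge_mulVec]
  ring

theorem cyclicWedge_smul (c : Fin 3 → R) (v : Fin 3 → Fin 2 → R) :
    cyclicWedge (fun i ↦ c i • v i) = (c 0 * c 1 * c 2) ^ 2 * cyclicWedge v := by
  simp only [cyclicWedge, wedge_smul_smul]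
  ring

end Wedge

section Field

variable {F : Type*} [Field F]

theorem linearIndependent_pair_iff_wedge_ne_zero {u v : Fin 2 → F} :
    LinearIndependent F ![u, v] ↔ wedge u v ≠ 0 := by
  have det_rows : (Matrix.of ![u, v]).det = wedge u v := by
    simp [wedge, Matrix.det_fin_two]
  rw [← det_rows, ← isUnit_iff_ne_zero, ← Matrix.isUnit_iff_isUnit_det,
    ← Matrix.linearIndependent_rows_iff_isUnit]
  rfl

theorem wedge_eq_zero_iff_mk_eq {u v : Fin 2 → F} (hu : u ≠ 0) (hv : v ≠ 0) :
    wedge u v = 0 ↔ Projectivization.mk F u hu = Projectivization.mk F v hv := by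
  rw [← not_iff_not, ← Ne, ← Ne, ← Projectivization.independent_pair_iff_ne,
    Projectivization.independent_mk_iff_LinearIndependent, linearIndependent_pair_iff_wedge_ne_zero]

theorem wedge_rep_eq_zero_iff {P Q : ℙ F (Fin 2 → F)} : wedge P.rep Q.rep = 0 ↔ P = Q := by
  rw [wedge_eq_zero_iff_mk_eq P.rep_nonzero Q.rep_nonzero, P.mk_rep, Q.mk_rep]

theorem cyclicWedge_rep_ne_zero_iff {t : Fin 3 → ℙ F (Fin 2 → F)} :
    cyclicWedge (fun i ↦ (t i).rep) ≠ 0 ↔ Function.Injective t := by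
  rw [cyclicWedge, mul_ne_zero_iff, mul_ne_zero_iff]
  simp only [ne_eq, wedge_rep_eq_zero_iff]
  constructor
  · rintro ⟨h₀₁, h₁₂, h₂₀⟩ i j hij
    fin_cases i <;> fin_cases j <;> grind
  · exact fun ht ↦ ⟨ht.ne (by decide), ht.ne (by decide), ht.ne (by decide)⟩

theorem exists_specialLinearGroup_smul_eq_of_isSquare_det {g : GL (Fin 2) F}
    (hg : IsSquare (g : Matrix (Fin 2) (Fin 2) F).det) :
    ∃ h : SL(2, F), ∀ P : ℙ F (Fin 2 → F), h • P = g • P := by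
  obtain ⟨s, hs⟩ := hg
  have hs0 : s ≠ 0 := by
    rintro rfl
    exact g.det_ne_zero (by simpa using hs)
  have det_scaled : (s⁻¹ • (g : Matrix (Fin 2) (Fin 2) F)).det = 1 := by
    rw [Matrix.det_smul, hs, Fintype.card_fin]
    field_simp
  refine ⟨⟨_, det_scaled⟩, fun P ↦ ?_⟩
  induction P using Projectivization.ind with | h v hv =>
  exact (Projectivization.mk_eq_mk_iff' F _ _ _ _).2
    ⟨s⁻¹, (Matrix.smul_mulVec s⁻¹ (g : Matrix (Fin 2) (Fin 2) F) v).symm⟩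

end Field

section ProjectiveLine

variable {F : Type} [Field F]

theorem embedPt_injective : Function.Injective (embedPt F) := by
  intro x y hxy
  simpa [wedge, sub_eq_zero] using (wedge_eq_zero_iff_mk_eq _ _).2 hxy

/-- The triple `(∞, 0, 1)` of points of the projective line, the base point for the transitivity of
`GL(2, F)` on triples of distinct points. -/
def standardTriple (F : Type) [Field F] : Fin 3 → ℙ F (Fin 2 → F) :=
  ![inftyPt F, embedPt F 0, embedPt F 1]

theorem exists_generalLinearGroup_smul_standardTriple {t : Fin 3 → ℙ F (Fin 2 → F)}
    (ht : Function.Injective t) : ∃ g : GL (Fin 2) F, g • standardTriple F = t := by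
  set u := (t 0).rep
  set v := (t 1).rep
  set w := (t 2).rep
  obtain ⟨huv, hvw, hwu⟩ : wedge u v ≠ 0 ∧ wedge v w ≠ 0 ∧ wedge w u ≠ 0 := by
    simpa [cyclicWedge] using cyclicWedge_rep_ne_zero_iff.2 ht
  -- Rescaled so that `u' + v'` is a multiple of `w`.
  set u' := wedge v w • u
  set v' := wedge w u • v
  have columns_det : (!![u' 0, v' 0; u' 1, v' 1] : Matrix (Fin 2) (Fin 2) F).det ≠ 0 := by
    have : wedge u' v' ≠ 0 := by
      rw [wedge_smul_smul]
      exact mul_ne_zero (mul_ne_zero hvw hwu) huv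
    simpa [wedge, mul_comm] using this
  refine ⟨Matrix.GeneralLinearGroup.mkOfDetNeZero _ columns_det, ?_⟩
  have image_eq {i : Fin 3} {x : Fin 2 → F} (hx : x ≠ 0) (c : F)
      (h : c • (t i).rep = !![u' 0, v' 0; u' 1, v' 1] *ᵥ x) :
      Matrix.GeneralLinearGroup.mkOfDetNeZero _ columns_det • Projectivization.mk F x hx = t i := by
    rw [← (t i).mk_rep]
    exact (Projectivization.mk_eq_mk_iff' F _ _ _ _).2 ⟨c, h⟩
  ext i
  fin_cases i
  · exact image_eq _ (wedge v w) (by ext j; fin_cases j <;> simp [u', u])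
  · exact image_eq _ (wedge w u) (by ext j; fin_cases j <;> simp [v', v])
  · refine image_eq _ (-wedge u v) ((wedge_smul_add_wedge_smul u v w).symm.trans ?_)
    ext j
    fin_cases j <;> simp [u', v']

end ProjectiveLine

section Orientation

variable {F : Type*} [Field F] [Fintype F] [DecidableEq F]

/-- The sign `χ ((x - y) * (y - z) * (z - x))` of a triple of points of the projective line,
written in homogeneous coordinates; it vanishes if two of the points coincide. -/
def orientation (t : Fin 3 → ℙ F (Fin 2 → F)) : ℤ :=
  quadraticChar F (cyclicWedge fun i ↦ (t i).rep)

theorem orientation_mk {v : Fin 3 → Fin 2 → F} (hv : ∀ i, v i ≠ 0) :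
    orientation (fun i ↦ Projectivization.mk F (v i) (hv i)) = quadraticChar F (cyclicWedge v) := by
  choose c hc using fun i ↦ Projectivization.exists_smul_eq_mk_rep F (v i) (hv i)
  have scalar_ne_zero : (c 0 * c 1 * c 2 : F) ≠ 0 := by simp
  simp only [orientation, ← hc, Units.smul_def]
  rw [cyclicWedge_smul (fun i ↦ (c i : F)), map_mul, quadraticChar_sq_one' scalar_ne_zero, one_mul]

theorem orientation_ne_zero_iff {t : Fin 3 → ℙ F (Fin 2 → F)} :
    orientation t ≠ 0 ↔ Function.Injective t := by
  rw [orientation, Ne, quadraticChar_eq_zero_iff, ← Ne, cyclicWedge_rep_ne_zero_iff]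

theorem orientation_eq_or_eq_neg {s t : Fin 3 → ℙ F (Fin 2 → F)} (hs : Function.Injective s)
    (ht : Function.Injective t) :
    orientation s = orientation t ∨ orientation s = -orientation t := by
  have h := quadraticChar_dichotomy (cyclicWedge_rep_ne_zero_iff.2 hs)
  have h' := quadraticChar_dichotomy (cyclicWedge_rep_ne_zero_iff.2 ht)
  simp only [orientation]
  omega

theorem orientation_generalLinearGroup_smul (g : GL (Fin 2) F) (t : Fin 3 → ℙ F (Fin 2 → F)) :
    orientation (g • t) =
      quadraticChar F (g : Matrix (Fin 2) (Fin 2) F).det * orientation t := by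
  have smul_eq_mk : g • t = fun i ↦ Projectivization.mk F
      ((g : Matrix (Fin 2) (Fin 2) F) *ᵥ (t i).rep)
      ((smul_ne_zero_iff_ne g).2 (t i).rep_nonzero) := by
    ext i
    conv_lhs => rw [Pi.smul_apply, ← (t i).mk_rep]
    rfl
  rw [smul_eq_mk, orientation_mk, cyclicWedge_mulVec, map_mul,
    quadraticChar_sq_one' g.det_ne_zero, one_mul, map_mul, orientation]

theorem orientation_specialLinearGroup_smul (g : SL(2, F)) (t : Fin 3 → ℙ F (Fin 2 → F)) :
    orientation (g • t) = orientation t := by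
  have h := orientation_generalLinearGroup_smul (g : GL (Fin 2) F) t
  rwa [Matrix.SpecialLinearGroup.coe_GL_coe_matrix, g.det_coe, map_one, one_mul] at h

theorem orientation_smul_of_quadraticChar_det_eq_neg_one {g : GL (Fin 2) F}
    (hg : quadraticChar F (g : Matrix (Fin 2) (Fin 2) F).det = -1)
    (t : Fin 3 → ℙ F (Fin 2 → F)) : orientation (g • t) = -orientation t := by
  rw [orientation_generalLinearGroup_smul, hg, neg_one_mul]

theorem exists_generalLinearGroup_quadraticChar_det_eq_neg_one (hF : ringChar F ≠ 2) :
    ∃ g : GL (Fin 2) F, quadraticChar F (g : Matrix (Fin 2) (Fin 2) F).det = -1 := by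
  obtain ⟨a, ha⟩ := quadraticChar_exists_neg_one' hF
  exact ⟨Matrix.GeneralLinearGroup.mkOfDetNeZero !![(a : F), 0; 0, 1] (by simp), by
    simpa [Matrix.GeneralLinearGroup.mkOfDetNeZero] using ha⟩

end Orientation

section FiniteProjectiveLine

variable {F : Type} [Field F] [Fintype F] [DecidableEq F]

theorem exists_specialLinearGroup_smul_eq {s t : Fin 3 → ℙ F (Fin 2 → F)}
    (hs : Function.Injective s) (hst : orientation s = orientation t) :
    ∃ h : SL(2, F), h • s = t := by
  have ht : Function.Injective t := by
    rwa [← orientation_ne_zero_iff, ← hst, orientation_ne_zero_iff]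
  obtain ⟨a, rfl⟩ := exists_generalLinearGroup_smul_standardTriple hs
  obtain ⟨b, rfl⟩ := exists_generalLinearGroup_smul_standardTriple ht
  set g := b * a⁻¹ with hg
  have smul_eq : g • a • standardTriple F = b • standardTriple F := by
    rw [hg, mul_smul, inv_smul_smul]
  have char_det : quadraticChar F (g : Matrix (Fin 2) (Fin 2) F).det = 1 := by
    rw [← smul_eq, orientation_generalLinearGroup_smul g] at hst
    exact mul_right_cancel₀ (orientation_ne_zero_iff.2 hs) (hst.symm.trans (one_mul _).symm)
  obtain ⟨h, hh⟩ := exists_specialLinearGroup_smul_eq_of_isSquare_det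
    ((quadraticChar_one_iff_isSquare g.det_ne_zero).1 char_det)
  exact ⟨h, (funext fun i ↦ hh _).trans smul_eq⟩

variable {N : (Fin 3 → ℙ F (Fin 2 → F)) → ℤ}

theorem eq_of_orientation_eq (hN : ∀ (h : SL(2, F)) t, N (h • t) = N t)
    {s t : Fin 3 → ℙ F (Fin 2 → F)} (hs : Function.Injective s)
    (hst : orientation s = orientation t) : N s = N t := by
  obtain ⟨h, rfl⟩ := exists_specialLinearGroup_smul_eq hs hst
  exact (hN h s).symm

section Flip

variable {g : GL (Fin 2) F}

theorem orientation_mul_sub_eq (hN : ∀ (h : SL(2, F)) t, N (h • t) = N t)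
    (hg : quadraticChar F (g : Matrix (Fin 2) (Fin 2) F).det = -1)
    {s t : Fin 3 → ℙ F (Fin 2 → F)} (hs : Function.Injective s) (ht : Function.Injective t) :
    orientation s * (N s - N (g • s)) = orientation t * (N t - N (g • t)) := by
  have flip := orientation_smul_of_quadraticChar_det_eq_neg_one hg
  have hgs : Function.Injective (g • s) := (MulAction.injective g).comp hs
  rcases orientation_eq_or_eq_neg hs ht with hst | hst
  · have count_eq : N s = N t := eq_of_orientation_eq hN hs hst
    have count_smul_eq : N (g • s) = N (g • t) :=
      eq_of_orientation_eq hN hgs (by rw [flip s, flip t, hst])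
    rw [hst, count_eq, count_smul_eq]
  · have count_eq : N s = N (g • t) := eq_of_orientation_eq hN hs (hst.trans (flip t).symm)
    have count_smul_eq : N (g • s) = N t :=
      eq_of_orientation_eq hN hgs (by rw [flip s, hst, neg_neg])
    rw [hst, count_eq, count_smul_eq]
    ring

variable [Fintype (ℙ F (Fin 2 → F))]

theorem two_mul_sum_orientation_mul
    (hg : quadraticChar F (g : Matrix (Fin 2) (Fin 2) F).det = -1) :
    2 * ∑ t, orientation t * N t = ∑ t, orientation t * (N t - N (g • t)) := by
  have sum_smul : ∑ t, orientation t * N t = -∑ t, orientation t * N (g • t) := by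
    rw [← Equiv.sum_comp (MulAction.toPerm g)]
    simp [orientation_smul_of_quadraticChar_det_eq_neg_one hg]
  simp only [mul_sub, Finset.sum_sub_distrib]
  omega

open Classical in
theorem two_mul_sum_orientation_mul_eq_card_mul (hN : ∀ (h : SL(2, F)) t, N (h • t) = N t)
    (hg : quadraticChar F (g : Matrix (Fin 2) (Fin 2) F).det = -1)
    {s : Fin 3 → ℙ F (Fin 2 → F)} (hs : Function.Injective s) :
    2 * ∑ t, orientation t * N t =
      (Finset.univ.filter fun t : Fin 3 → ℙ F (Fin 2 → F) ↦ Function.Injective t).card *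
        (orientation s * (N s - N (g • s))) := by
  rw [two_mul_sum_orientation_mul hg, ← nsmul_eq_mul, ← Finset.sum_const, Finset.sum_filter]
  refine Finset.sum_congr rfl fun t _ ↦ ?_
  split_ifs with ht
  · exact orientation_mul_sub_eq hN hg ht hs
  · rw [not_ne_iff.1 (orientation_ne_zero_iff.not.2 ht), zero_mul]

end Flip

theorem sum_orientation_mul_eq_zero_iff [Fintype (ℙ F (Fin 2 → F))] (hF : ringChar F ≠ 2)
    (hN : ∀ (h : SL(2, F)) t, N (h • t) = N t) :
    ∑ t, orientation t * N t = 0 ↔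
      ∀ s t, Function.Injective s → Function.Injective t → N s = N t := by
  obtain ⟨g, hg⟩ := exists_generalLinearGroup_quadraticChar_det_eq_neg_one hF
  have flip := orientation_smul_of_quadraticChar_det_eq_neg_one hg
  constructor
  · intro hzero s t hs ht
    have count_smul_eq : N t = N (g • t) := by
      have h := two_mul_sum_orientation_mul_eq_card_mul hN hg ht
      rw [hzero, mul_zero, zero_eq_mul, Nat.cast_eq_zero, mul_eq_zero, sub_eq_zero] at h
      refine (h.resolve_left ?_).resolve_left (orientation_ne_zero_iff.2 ht)
      exact Finset.card_ne_zero_of_mem (a := t) (by simpa using ht)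
    rcases orientation_eq_or_eq_neg hs ht with hst | hst
    · exact eq_of_orientation_eq hN hs hst
    · exact (eq_of_orientation_eq hN hs (hst.trans (flip t).symm)).trans count_smul_eq.symm
  · intro h
    have term_eq_zero (t : Fin 3 → ℙ F (Fin 2 → F)) :
        orientation t * (N t - N (g • t)) = 0 := by
      by_cases ht : Function.Injective t
      · rw [h t (g • t) ht ((MulAction.injective g).comp ht), sub_self, mul_zero]
      · rw [not_ne_iff.1 (orientation_ne_zero_iff.not.2 ht), zero_mul]
    simpa [term_eq_zero] using two_mul_sum_orientation_mul (N := N) hg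

open Classical in
theorem isDesign_orbit_iff_sum_orientation_eq_zero [Fintype (ℙ F (Fin 2 → F))]
    (hF : ringChar F ≠ 2) {B : Set (ℙ F (Fin 2 → F))} (hB : 3 ≤ B.ncard) :
    IsDesign 3 (MulAction.orbit SL(2, F) B) ↔
      ∑ t : Fin 3 → ℙ F (Fin 2 → F) with Set.range t ⊆ B, orientation t = 0 := by
  obtain ⟨T, hTB, hT⟩ := Finset.exists_subset_card_eq (Set.ncard_eq_toFinset_card' B ▸ hB)
  have count_invariant (h : SL(2, F)) (t : Fin 3 → ℙ F (Fin 2 → F)) :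
      (blockCount (MulAction.orbit SL(2, F) B) (Set.range (h • t)) : ℤ) =
        blockCount (MulAction.orbit SL(2, F) B) (Set.range t) := by
    rw [show Set.range (h • t) = h • Set.range t from Set.range_smul h t, blockCount_orbit_smul]
  have orbit_ncard_ne_zero : ((MulAction.orbit SL(2, F) B).ncard : ℤ) ≠ 0 :=
    Nat.cast_ne_zero.2 (Set.ncard_ne_zero_of_mem (MulAction.mem_orbit_self B))
  rw [isDesign_iff_blockCount_range_eq hT (blockCount_orbit_pos (Set.subset_toFinset.1 hTB)),
    ← mul_eq_zero_iff_left orbit_ncard_ne_zero,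
    ← sum_mul_blockCount_orbit orientation_specialLinearGroup_smul,
    sum_orientation_mul_eq_zero_iff hF count_invariant]
  simp only [Nat.cast_inj]

theorem orientation_embedPt (x y z : F) :
    orientation ![embedPt F x, embedPt F y, embedPt F z] =
      quadraticChar F ((x - y) * ((y - z) * (z - x))) := by
  have affine_ne_zero (i : Fin 3) : (![![x, 1], ![y, 1], ![z, 1]] : Fin 3 → Fin 2 → F) i ≠ 0 := by
    fin_cases i <;> simp
  have embedPt_eq_mk : ![embedPt F x, embedPt F y, embedPt F z] =
      fun i ↦ Projectivization.mk F _ (affine_ne_zero i) := by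
    ext i
    fin_cases i <;> rfl
  rw [embedPt_eq_mk, orientation_mk]
  simp [cyclicWedge, wedge]

end FiniteProjectiveLine

/-! ### The subgroup of order `k` as a starter block -/

section RootsOfUnity

variable {F : Type*} [Field F] [Fintype F]

theorem ringChar_ne_two_of_odd_card (h : Odd (Fintype.card F)) : ringChar F ≠ 2 :=
  mt FiniteField.even_card_iff_char_two.1 (Nat.odd_iff.1 h ▸ one_ne_zero)

variable [DecidableEq F]

theorem card_filter_pow_eq_one {k : ℕ} (hk : k ∣ Fintype.card F - 1) :
    (Finset.univ.filter fun x : F ↦ x ^ k = 1).card = k := by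
  obtain ⟨g, hg⟩ := IsCyclic.exists_ofOrder_eq_natCard (α := Fˣ)
  rw [Nat.card_units, Nat.card_eq_fintype_card] at hg
  have card_pos : Fintype.card F - 1 ≠ 0 := by
    have := Fintype.one_lt_card (α := F)
    omega
  have hk0 : 0 < k := Nat.pos_of_dvd_of_pos hk (Nat.pos_of_ne_zero card_pos)
  have order_eq : orderOf (g ^ (orderOf g / k)) = k :=
    orderOf_pow_orderOf_div (hg ▸ card_pos) (hg ▸ hk)
  have hζ : IsPrimitiveRoot ((g ^ (orderOf g / k) : Fˣ) : F) k :=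
    IsPrimitiveRoot.coe_units_iff.2 (IsPrimitiveRoot.iff_orderOf.2 order_eq)
  have roots_eq : Finset.univ.filter (fun x : F ↦ x ^ k = 1) = Polynomial.nthRootsFinset k 1 := by
    ext x
    simp [Polynomial.mem_nthRootsFinset hk0]
  rw [roots_eq, hζ.card_nthRootsFinset]

end RootsOfUnity

theorem gives3Design_iff_isDesign_orbit {F : Type} [Field F] [Fintype F] [DecidableEq F] (k : ℕ) :
    gives3Design F k ↔ IsDesign 3 (MulAction.orbit SL(2, F)
      (embedPt F '' (Finset.univ.filter fun x : F ↦ x ^ k = 1 : Finset F))) := by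
  have designBlocks_eq : designBlocks F k = MulAction.orbit SL(2, F) (starterB F k) :=
    Set.ext fun S ↦ exists_congr fun g ↦ eq_comm
  rw [Finset.coe_filter_univ, ← starterB, ← designBlocks_eq]
  rfl

end OrbitDesign

open OrbitDesign

theorem stmt_4_general (F : Type) [Field F] [Fintype F] [DecidableEq F] (hF : ringChar F ≠ 2)
    (B : Finset F) (hB : 3 ≤ B.card) :
    IsDesign 3 (MulAction.orbit SL(2, F) (embedPt F '' B)) ↔
      ∑ x ∈ B, ∑ y ∈ B, ∑ z ∈ B, quadraticChar F ((x - y) * ((y - z) * (z - x))) = 0 := by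
  have := Fintype.ofFinite (ℙ F (Fin 2 → F))
  have three_le_ncard : 3 ≤ (embedPt F '' (B : Set F)).ncard := by
    rwa [Set.ncard_image_of_injective _ embedPt_injective, Set.ncard_coe_finset]
  rw [isDesign_orbit_iff_sum_orientation_eq_zero hF three_le_ncard,
    sum_range_subset_image embedPt_injective]
  simp only [orientation_embedPt]

/-- Lemma 2.6: for even `e = (q-1)/k`, `(q,k)` gives a 3-design iff the sum of
`Δ({x,y,z}) = χ((x-y)(y-z)(z-x))` over all 3-subsets `{x,y,z}` of `B` vanishes.
(Here the sum is taken over ordered triples of elements of `B`; triples with a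
repeated entry contribute `χ(0) = 0`, and each 3-subset is counted six times
with the same value since `χ(-1) = 1`, so this sum is six times the sum over
3-subsets and vanishes iff the latter does.) -/
theorem stmt_4 (F : Type) [Field F] [Fintype F] [DecidableEq F]
    (q k : ℕ) (hq : Fintype.card F = q) (hqodd : Odd q) (hq4 : q % 4 = 1)
    (hkdvd : k ∣ q - 1) (hk3 : 3 < k) (hkq : k < q - 1)
    (he : Even ((q - 1) / k)) :
    gives3Design F k ↔
      (∑ x ∈ Finset.univ.filter (fun x : F => x ^ k = 1),
        ∑ y ∈ Finset.univ.filter (fun y : F => y ^ k = 1),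
          ∑ z ∈ Finset.univ.filter (fun z : F => z ^ k = 1),
            quadraticChar F ((x - y) * ((y - z) * (z - x)))) = 0 := by
  rw [gives3Design_iff_isDesign_orbit]
  exact stmt_4_general F (ringChar_ne_two_of_odd_card (hq ▸ hqodd)) _
    (by rw [card_filter_pow_eq_one (hq ▸ hkdvd)]; exact hk3.le)
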